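/- arXiv:2204.10671 — 3 statements merged into one kernel-verified Lean document; each statement's English description precedes it below -/
import Mathlib

section
/- There is a constant c such that for every integer q ≥ 1 there is a quantum OBDD of width at most c·q² representing the total Boolean function REQ_q with bounded error; namely, it accepts every input with REQ_q = 1 with probability 1 and accepts every input with REQ_q = 0 with probability at most 1/3. In terms of the input length n = 2q(⌈log₂ 2q⌉+1), the width is O(n²/(log n)²). -/
set_option maxHeartbeats 1000000
set_option linter.unusedVariables false
/-- `binVal l a = Σ_{j=1}^l a_j 2^{l-j}` (a₁ is the most significant bit). -/
def binVal (l : ℕ) (a : Fin l → Bool) : ℕ :=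
  ∑ j : Fin l, if a j then 2 ^ (l - 1 - (j : ℕ)) else 0
/-- A quantum OBDD of width `w` over `n` Boolean variables. -/
structure QOBDD (n w : ℕ) where
  ord : Equiv.Perm (Fin n)
  G : Fin n → Bool → Matrix.unitaryGroup (Fin w) ℂ
  start : Fin w
  acc : Finset (Fin w)

namespace QOBDD

noncomputable def finalVec {n w : ℕ} (M : QOBDD n w) (x : Fin n → Bool) : Fin w → ℂ :=
  (List.finRange n).foldl
    (fun ψ i => Matrix.mulVec (M.G i (x (M.ord i)) : Matrix (Fin w) (Fin w) ℂ) ψ)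
    (Pi.single M.start 1)

noncomputable def acceptProb {n w : ℕ} (M : QOBDD n w) (x : Fin n → Bool) : ℝ :=
  ∑ j ∈ M.acc, Complex.normSq (M.finalVec x j)

/-- `M` represents the total function `f` with margin `ε`. -/
def Represents {n w : ℕ} (M : QOBDD n w) (ε : ℝ) (f : (Fin n → Bool) → Bool) : Prop :=
  ∀ x, (f x = true → 1 / 2 + ε ≤ M.acceptProb x) ∧
       (f x = false → M.acceptProb x ≤ 1 / 2 - ε)

/-- `M` represents the partial function `F` with margin `ε`. -/
def RepresentsPartial {n w : ℕ} (M : QOBDD n w) (ε : ℝ)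
    (F : (Fin n → Bool) → Option Bool) : Prop :=
  ∀ x, (F x = some true → 1 / 2 + ε ≤ M.acceptProb x) ∧
       (F x = some false → M.acceptProb x ≤ 1 / 2 - ε)

/-- The QOBDD obtained by reordering: order `π`, matrices `G' i = G (ord⁻¹ (π i))`. -/
def reorder {n w : ℕ} (M : QOBDD n w) (π : Equiv.Perm (Fin n)) : QOBDD n w :=
  ⟨π, fun i => M.G (M.ord.symm (π i)), M.start, M.acc⟩

end QOBDD
lemma zIdx {q l : ℕ} (i : Fin q) (j : Fin l) : (i : ℕ) * l + (j : ℕ) < q * (l + 1) :=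
  calc (i : ℕ) * l + (j : ℕ) < (i : ℕ) * l + l := Nat.add_lt_add_left j.isLt _
    _ = ((i : ℕ) + 1) * l := by ring
    _ ≤ q * l := Nat.mul_le_mul i.isLt (Nat.le_refl l)
    _ ≤ q * (l + 1) := Nat.mul_le_mul (Nat.le_refl q) (Nat.le_succ l)

lemma yIdx {q l : ℕ} (i : Fin q) : q * l + (i : ℕ) < q * (l + 1) :=
  calc q * l + (i : ℕ) < q * l + q := Nat.add_lt_add_left i.isLt _
    _ = q * (l + 1) := by ring

/-- The bit `z_{i,j}` of an input to the reordered function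
(layout: `z_{1,1},…,z_{q,l}, y_1,…,y_q`). -/
def zOf (q l : ℕ) (x : Fin (q * (l + 1)) → Bool) (i : Fin q) (j : Fin l) : Bool :=
  x ⟨(i : ℕ) * l + (j : ℕ), zIdx i j⟩

/-- The value bit `y_i` of an input to the reordered function. -/
def yOf (q l : ℕ) (x : Fin (q * (l + 1)) → Bool) (i : Fin q) : Bool :=
  x ⟨q * l + (i : ℕ), yIdx i⟩

/-- `z_{1,j} ⊕ ⋯ ⊕ z_{i,j}`. -/
def xorZ (q l : ℕ) (x : Fin (q * (l + 1)) → Bool) (i : Fin q) (j : Fin l) : Bool :=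
  decide ((Finset.univ.filter (fun i' : Fin q => i' ≤ i ∧ zOf q l x i' j = true)).card % 2 = 1)

/-- `θ(i) − 1` for the plain reordering. -/
def addrOrd (q l : ℕ) (x : Fin (q * (l + 1)) → Bool) (i : Fin q) : ℕ :=
  binVal l (zOf q l x i)

/-- `θ(i) − 1` for the xor-reordering. -/
def addrXor (q l : ℕ) (x : Fin (q * (l + 1)) → Bool) (i : Fin q) : ℕ :=
  binVal l (xorZ q l x i)

/-- The partial reordered function: defined exactly when the addresses form a
permutation of `{1,…,q}`; then position `j` of `f`'s argument is `y_{θ⁻¹(j)}`. -/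
noncomputable def ordPartial (q l : ℕ) (f : (Fin q → Bool) → Bool)
    (addr : (Fin (q * (l + 1)) → Bool) → Fin q → ℕ) :
    (Fin (q * (l + 1)) → Bool) → Option Bool := fun x =>
  if h : ∃ σ : Equiv.Perm (Fin q), ∀ i, addr x i = (σ i : ℕ) then
    some (f fun j => yOf q l x (h.choose.symm j))
  else none

/-- The partial function `ord(f)`. -/
noncomputable def ordF (q : ℕ) (f : (Fin q → Bool) → Bool) :
    (Fin (q * (Nat.clog 2 q + 1)) → Bool) → Option Bool :=
  ordPartial q (Nat.clog 2 q) f (addrOrd q (Nat.clog 2 q))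

/-- The partial function `⊕ord(f)`. -/
noncomputable def xorOrdF (q : ℕ) (f : (Fin q → Bool) → Bool) :
    (Fin (q * (Nat.clog 2 q + 1)) → Bool) → Option Bool :=
  ordPartial q (Nat.clog 2 q) f (addrXor q (Nat.clog 2 q))
/-- `Adr(i)` for an input of `REQ_q`. -/
def reqAdr (q : ℕ) (x : Fin (2 * q * (Nat.clog 2 (2 * q) + 1)) → Bool) (i : Fin (2 * q)) : ℕ :=
  addrXor (2 * q) (Nat.clog 2 (2 * q)) x i

def reqU (q : ℕ) (x : Fin (2 * q * (Nat.clog 2 (2 * q) + 1)) → Bool) : ℕ :=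
  (∑ i : Fin (2 * q),
      if reqAdr q x i < q then
        2 ^ reqAdr q x i * (if yOf (2 * q) (Nat.clog 2 (2 * q)) x i then 1 else 0)
      else 0) % 2 ^ q

def reqV (q : ℕ) (x : Fin (2 * q * (Nat.clog 2 (2 * q) + 1)) → Bool) : ℕ :=
  (∑ i : Fin (2 * q),
      if q ≤ reqAdr q x i then
        2 ^ (reqAdr q x i - q) * (if yOf (2 * q) (Nat.clog 2 (2 * q)) x i then 1 else 0)
      else 0) % 2 ^ q

/-- The (total) xor-reordered equality function `REQ_q`. -/
def REQ (q : ℕ) (x : Fin (2 * q * (Nat.clog 2 (2 * q) + 1)) → Bool) : Bool :=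
  decide (reqU q x = reqV q x)

open Matrix

/-- A derandomized exponential moment bound: bounded centred functions admit sample points whose
exponential potential grows at most as fast as for independent uniform samples. -/
lemma exists_exp_potential_le {K I : Type*} [Fintype K] [Nonempty K] [Fintype I]
    (g : K → I → ℝ) (hg : ∀ k i, |g k i| ≤ 1) (hsum : ∀ i, ∑ k, g k i = 0)
    (c : ℝ) (hc : |c| ≤ 1) (m : ℕ) :
    ∃ k : Fin m → K, ∑ i, Real.exp (c * ∑ j, g (k j) i) ≤ Fintype.card I * (1 + c ^ 2) ^ m := by
  induction m with
  | zero => exact ⟨Fin.elim0, by simp⟩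
  | succ m ih =>
    obtain ⟨k, hk⟩ := ih
    have hstep : ∀ a i, Real.exp (c * g a i) ≤ 1 + c * g a i + c ^ 2 := by
      intro a i
      have hle : |c * g a i| ≤ 1 := by
        rw [abs_mul]
        exact mul_le_one₀ hc (abs_nonneg _) (hg a i)
      have hexp := (abs_le.mp (Real.abs_exp_sub_one_sub_id_le hle)).2
      have hg2 : g a i ^ 2 ≤ 1 := (sq_le_one_iff_abs_le_one _).mpr (hg a i)
      nlinarith [sq_nonneg c]
    have havg : ∑ a : K, ∑ i, Real.exp (c * ∑ j, g ((Fin.snoc k a : Fin (m + 1) → K) j) i) ≤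
        ∑ _a : K, Fintype.card I * (1 + c ^ 2) ^ (m + 1) := by
      calc ∑ a : K, ∑ i, Real.exp (c * ∑ j, g ((Fin.snoc k a : Fin (m + 1) → K) j) i)
          = ∑ i, Real.exp (c * ∑ j, g (k j) i) * ∑ a, Real.exp (c * g a i) := by
            rw [Finset.sum_comm]
            refine Finset.sum_congr rfl fun i _ => ?_
            rw [Finset.mul_sum]
            refine Finset.sum_congr rfl fun a _ => ?_
            simp [Fin.sum_univ_castSucc, mul_add, Real.exp_add]
        _ ≤ ∑ i, Real.exp (c * ∑ j, g (k j) i) * (Fintype.card K * (1 + c ^ 2)) := by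
            gcongr with i
            calc ∑ a, Real.exp (c * g a i) ≤ ∑ a, (1 + c * g a i + c ^ 2) :=
                  Finset.sum_le_sum fun a _ => hstep a i
              _ = Fintype.card K * (1 + c ^ 2) := by
                  simp only [Finset.sum_add_distrib, ← Finset.mul_sum, hsum]
                  simp
                  ring
        _ ≤ Fintype.card I * (1 + c ^ 2) ^ m * (Fintype.card K * (1 + c ^ 2)) := by
            rw [← Finset.sum_mul]
            gcongr
        _ = _ := by
            simp
            ring
    obtain ⟨a, -, ha⟩ := Finset.exists_le_of_sum_le Finset.univ_nonempty havg
    exact ⟨Fin.snoc k a, ha⟩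

/-- A set of `100 q` fingerprinting keys modulo `2 ^ q`. -/
lemma exists_fingerprint_keys (q : ℕ) (hq : 1 ≤ q) :
    ∃ k : Fin (100 * q) → ZMod (2 ^ q), ∀ s : ZMod (2 ^ q), s ≠ 0 →
      Complex.normSq (∑ j, ZMod.stdAddChar (k j * s)) ≤ (100 * q : ℝ) ^ 2 / 3 := by
  let g : ZMod (2 ^ q) → {s : ZMod (2 ^ q) // s ≠ 0} × Fin 4 → ℝ :=
    fun k i => (Complex.I ^ (i.2 : ℕ) * ZMod.stdAddChar (k * i.1.1)).re
  have hg : ∀ k i, |g k i| ≤ 1 := by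
    intro k i
    refine (Complex.abs_re_le_norm _).trans ?_
    simp [AddChar.norm_apply]
  have hsum : ∀ i, ∑ k, g k i = 0 := by
    intro i
    have h := AddChar.sum_mulShift i.1.1 (ZMod.isPrimitive_stdAddChar (2 ^ q))
    rw [if_neg i.1.2, Nat.cast_zero] at h
    simp only [g]
    rw [← Complex.re_sum, ← Finset.mul_sum, h]
    simp
  obtain ⟨k, hk⟩ := exists_exp_potential_le g hg hsum (1 / 5) (by norm_num [abs_of_pos]) (100 * q)
  refine ⟨k, fun s hs => ?_⟩
  have hcard : (Fintype.card ({s : ZMod (2 ^ q) // s ≠ 0} × Fin 4) : ℝ) ≤ Real.exp (3 * q) := by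
    have h1 : Fintype.card ({s : ZMod (2 ^ q) // s ≠ 0} × Fin 4) ≤ 8 ^ q := by
      rw [Fintype.card_prod, Fintype.card_fin]
      have h2 := Fintype.card_subtype_le (fun s : ZMod (2 ^ q) => s ≠ 0)
      rw [ZMod.card] at h2
      have h4 : 4 ^ 1 ≤ 4 ^ q := Nat.pow_le_pow_right (by norm_num) hq
      calc _ ≤ 2 ^ q * 4 ^ q := Nat.mul_le_mul h2 h4
        _ = 8 ^ q := by rw [← mul_pow]; norm_num
    calc (Fintype.card ({s : ZMod (2 ^ q) // s ≠ 0} × Fin 4) : ℝ) ≤ (8 : ℝ) ^ q := by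
          exact_mod_cast h1
      _ ≤ (Real.exp 3) ^ q := by
          gcongr
          have h3 : Real.exp 3 = Real.exp 1 ^ 3 := by rw [← Real.exp_nat_mul]; norm_num
          rw [h3]
          calc (8 : ℝ) = 2 ^ 3 := by norm_num
            _ ≤ _ := by gcongr; linarith [Real.exp_one_gt_d9]
      _ = Real.exp (3 * q) := by rw [← Real.exp_nat_mul, mul_comm]
  have hgrow : (1 + (1 / 5 : ℝ) ^ 2) ^ (100 * q) ≤ Real.exp (4 * q) := by
    calc (1 + (1 / 5 : ℝ) ^ 2) ^ (100 * q) ≤ (Real.exp (1 / 25)) ^ (100 * q) := by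
          gcongr
          have := Real.add_one_le_exp (1 / 25 : ℝ)
          linarith
      _ = Real.exp (4 * q) := by
          rw [← Real.exp_nat_mul]
          push_cast
          ring_nf
  have hdir : ∀ r : Fin 4,
      (Complex.I ^ (r : ℕ) * ∑ j, ZMod.stdAddChar (k j * s)).re ≤ 35 * q := by
    intro r
    have h1 := (Finset.single_le_sum (fun i _ => (Real.exp_pos (1 / 5 * ∑ j, g (k j) i)).le)
      (Finset.mem_univ ((⟨s, hs⟩, r) : {s : ZMod (2 ^ q) // s ≠ 0} × Fin 4))).trans hk
    have h2 := h1.trans (mul_le_mul hcard hgrow (by positivity) (by positivity))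
    rw [← Real.exp_add, Real.exp_le_exp] at h2
    simp only [g] at h2
    rw [← Complex.re_sum, ← Finset.mul_sum] at h2
    linarith
  have h0 := hdir 0
  have h1 := hdir 1
  have h2 := hdir 2
  have h3 := hdir 3
  simp [Complex.I_sq, Complex.I_pow_three] at h0 h1 h2 h3
  rw [Complex.normSq_apply]
  simp only [Complex.re_sum, Complex.im_sum]
  nlinarith

lemma List.foldl_finRange_eq {α : Type*} {n : ℕ} (f : α → Fin n → α) (s : ℕ → α)
    (hs : ∀ p : Fin n, s (p + 1) = f (s p) p) : (List.finRange n).foldl f (s 0) = s n := by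
  induction n with
  | zero => simp
  | succ n ih =>
    rw [List.finRange_succ_last, List.foldl_append, List.foldl_map,
      ih (fun a p => f a p.castSucc) fun p => hs p.castSucc]
    exact (hs (Fin.last n)).symm

/-- Running unitary gates in a space with a distinguished orthonormal basis, starting from a basis
vector and measuring in that basis, is a QOBDD. -/
lemma QOBDD.exists_of_orthonormalBasis {n : ℕ} {ι : Type*} [Fintype ι] [DecidableEq ι]
    (b : OrthonormalBasis ι ℂ (EuclideanSpace ℂ ι)) (ord : Equiv.Perm (Fin n))
    (U : Fin n → Bool → unitaryGroup ι ℂ) (s : ι) (A : Finset ι) :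
    ∃ M : QOBDD n (Fintype.card ι), ∀ (x : Fin n → Bool) (ψ : ℕ → ι → ℂ), ψ 0 = (b s).ofLp →
      (∀ p : Fin n, ψ (p + 1) = (U p (x (ord p)) : Matrix ι ι ℂ) *ᵥ ψ p) →
      M.acceptProb x = ∑ j ∈ A, Complex.normSq (star (b j).ofLp ⬝ᵥ ψ n) := by
  let e := Fintype.equivFin ι
  let R : Matrix ι (Fin (Fintype.card ι)) ℂ := of fun y w => (b (e.symm w)).ofLp y
  have hR : Rᴴ * R = 1 := by
    ext v w
    have h := (orthonormal_iff_ite.mp b.orthonormal) (e.symm v) (e.symm w)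
    rw [EuclideanSpace.inner_eq_star_dotProduct, dotProduct_comm] at h
    simp only [EmbeddingLike.apply_eq_iff_eq] at h
    rw [one_apply, ← h]
    rfl
  have hR' : R * Rᴴ = 1 := (mul_eq_one_comm_of_card_eq _ _ _ (by simp)).mp hR
  have hunit : ∀ V ∈ unitaryGroup ι ℂ, Rᴴ * V * R ∈ unitaryGroup (Fin (Fintype.card ι)) ℂ := by
    intro V hV
    rw [mem_unitaryGroup_iff, star_eq_conjTranspose] at hV ⊢
    calc Rᴴ * V * R * (Rᴴ * V * R)ᴴ = Rᴴ * (V * (R * Rᴴ) * Vᴴ) * R := by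
          simp only [conjTranspose_mul, conjTranspose_conjTranspose, Matrix.mul_assoc]
      _ = 1 := by rw [hR', Matrix.mul_one, hV, Matrix.mul_one, hR]
  refine ⟨⟨ord, fun p c => ⟨_, hunit _ (U p c).2⟩, e s, A.map e.toEmbedding⟩, fun x ψ h0 hstep => ?_⟩
  have hstart : (Pi.single (e s) 1 : Fin (Fintype.card ι) → ℂ) = Rᴴ *ᵥ ψ 0 := by
    have h : ψ 0 = R *ᵥ Pi.single (e s) 1 := by
      rw [h0]
      ext y
      simp [R]
    rw [h, mulVec_mulVec, hR, one_mulVec]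
  have hfinal : finalVec ⟨ord, fun p c => ⟨_, hunit _ (U p c).2⟩, e s, A.map e.toEmbedding⟩ x =
      Rᴴ *ᵥ ψ n := by
    unfold finalVec
    dsimp only
    rw [hstart]
    refine List.foldl_finRange_eq _ (fun p => Rᴴ *ᵥ ψ p) fun p => ?_
    rw [hstep, mulVec_mulVec, mulVec_mulVec, Matrix.mul_assoc, Matrix.mul_assoc, hR',
      Matrix.mul_one]
  rw [acceptProb, hfinal, Finset.sum_map]
  refine Finset.sum_congr rfl fun j _ => ?_
  congr 1
  simp [mulVec, dotProduct, R]

lemma Matrix.permMatrix_mem_unitaryGroup {ι : Type*} [Fintype ι] [DecidableEq ι]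
    (σ : Equiv.Perm ι) : σ.permMatrix ℂ ∈ unitaryGroup ι ℂ := by
  rw [mem_unitaryGroup_iff, star_eq_conjTranspose, conjTranspose_permMatrix, ← permMatrix_mul]
  simp

lemma Matrix.diagonal_mem_unitaryGroup {ι : Type*} [Fintype ι] [DecidableEq ι]
    (d : ι → ℂ) (hd : ∀ i, ‖d i‖ = 1) : diagonal d ∈ unitaryGroup ι ℂ := by
  rw [mem_unitaryGroup_iff, star_eq_conjTranspose, diagonal_conjTranspose, diagonal_mul_diagonal,
    diagonal_eq_one]
  ext i
  simp [Complex.mul_conj, Complex.normSq_eq_norm_sq, hd]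

/-- The fingerprint state with classical register `a` and accumulated value `S`. -/
noncomputable def fingerprintVec {H : Type*} [DecidableEq H] {N t : ℕ} [NeZero N]
    (k : Fin t → ZMod N) (a : H) (S : ZMod N) : H × Fin t → ℂ :=
  fun y => if y.1 = a then ((√t : ℝ) : ℂ)⁻¹ * ZMod.stdAddChar (k y.2 * S) else 0

lemma permMatrix_mulVec_fingerprintVec {H : Type*} [AddCommGroup H] [Fintype H] [DecidableEq H]
    {N t : ℕ} [NeZero N] (k : Fin t → ZMod N) (a d : H) (S : ZMod N) :
    Equiv.Perm.permMatrix ℂ ((Equiv.subRight d).prodCongr (Equiv.refl (Fin t))) *ᵥ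
      fingerprintVec k a S = fingerprintVec k (a + d) S := by
  rw [permMatrix_mulVec]
  ext y
  simp [fingerprintVec, sub_eq_iff_eq_add]

lemma diagonal_mulVec_fingerprintVec {H : Type*} [Fintype H] [DecidableEq H]
    {N t : ℕ} [NeZero N] (k : Fin t → ZMod N) (a : H) (S : ZMod N) (f : H → ZMod N) :
    diagonal (fun y : H × Fin t => (ZMod.stdAddChar (k y.2 * f y.1) : ℂ)) *ᵥ
      fingerprintVec k a S = fingerprintVec k a (S + f a) := by
  ext y
  rw [mulVec_diagonal, fingerprintVec, fingerprintVec]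
  split_ifs with h
  · rw [h, mul_add, AddChar.map_add_eq_mul]
    ring
  · simp

lemma star_fingerprintVec_dotProduct {H : Type*} [Fintype H] [DecidableEq H]
    {N t : ℕ} [NeZero N] (k : Fin t → ZMod N) (a a' : H) (S : ZMod N) :
    star (fingerprintVec k a 0) ⬝ᵥ fingerprintVec k a' S =
      if a = a' then (t : ℂ)⁻¹ * ∑ m, ZMod.stdAddChar (k m * S) else 0 := by
  have hsq : ((√t : ℝ) : ℂ)⁻¹ * ((√t : ℝ) : ℂ)⁻¹ = (t : ℂ)⁻¹ := by
    rw [← mul_inv, ← Complex.ofReal_mul, Real.mul_self_sqrt (Nat.cast_nonneg t)]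
    simp
  simp only [dotProduct, fingerprintVec, Fintype.sum_prod_type, Pi.star_apply]
  rw [Finset.sum_eq_single a]
  · by_cases h : a = a'
    · simp only [h, if_true, mul_zero, AddChar.map_zero_eq_one, Finset.mul_sum]
      refine Finset.sum_congr rfl fun m _ => ?_
      simp only [mul_one, star_inv₀, Complex.star_def, Complex.conj_ofReal]
      rw [← mul_assoc, hsq]
    · simp [h]
  · intro c _ hc
    simp [hc]
  · simp

/-- A classical register over a finite group together with a modular accumulator can be
simulated by a QOBDD that tests, with one-sided error, whether the accumulator ends at zero. -/
lemma QOBDD.exists_fingerprint (q : ℕ) (hq : 1 ≤ q) {n : ℕ} {H : Type*} [AddCommGroup H]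
    [Fintype H] [DecidableEq H] (ord : Equiv.Perm (Fin n)) (D : Fin n → Bool → H)
    (f : Fin n → Bool → H → ZMod (2 ^ q)) :
    ∃ M : QOBDD n (Fintype.card (H × Fin (100 * q))),
      ∀ (x : Fin n → Bool) (a : ℕ → H) (S : ℕ → ZMod (2 ^ q)), a 0 = 0 → S 0 = 0 →
        (∀ p : Fin n, a (p + 1) = a p + D p (x (ord p))) →
        (∀ p : Fin n, S (p + 1) = S p + f p (x (ord p)) (a p)) →
        (S n = 0 → M.acceptProb x = 1) ∧ (S n ≠ 0 → M.acceptProb x ≤ 1 / 3) := by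
  obtain ⟨k, hk⟩ := exists_fingerprint_keys q hq
  have ht : 0 < 100 * q := by omega
  have htC : ((100 * q : ℕ) : ℂ) ≠ 0 := by exact_mod_cast ht.ne'
  let m₀ : Fin (100 * q) := ⟨0, ht⟩
  let v : H × Fin (100 * q) → EuclideanSpace ℂ (H × Fin (100 * q)) :=
    fun y => WithLp.toLp 2 (fingerprintVec k y.1 0)
  have horth : Orthonormal ℂ ({y : H × Fin (100 * q) | y.2 = m₀}.domRestrict v) := by
    rw [orthonormal_iff_ite]
    rintro ⟨⟨a, m⟩, hm⟩ ⟨⟨a', m'⟩, hm'⟩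
    obtain rfl : m = m₀ := hm
    obtain rfl : m' = m₀ := hm'
    rw [EuclideanSpace.inner_eq_star_dotProduct, dotProduct_comm]
    refine (star_fingerprintVec_dotProduct k a a' 0).trans ?_
    have hone : ((100 * q : ℕ) : ℂ)⁻¹ * ∑ m, ZMod.stdAddChar (k m * 0) = 1 := by
      simp only [mul_zero, AddChar.map_zero_eq_one, Finset.sum_const, Finset.card_univ,
        Fintype.card_fin, nsmul_eq_mul, mul_one]
      exact inv_mul_cancel₀ htC
    rw [hone]
    simp
  obtain ⟨b, hb⟩ := horth.exists_orthonormalBasis_extension_of_card_eq (by simp)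
  have hb' : ∀ a, (b (a, m₀)).ofLp = fingerprintVec k a 0 := fun a => by rw [hb (a, m₀) rfl]
  obtain ⟨M, hM⟩ := exists_of_orthonormalBasis b ord
    (fun p c =>
      ⟨Equiv.Perm.permMatrix ℂ ((Equiv.subRight (D p c)).prodCongr (Equiv.refl _)),
        permMatrix_mem_unitaryGroup _⟩ *
      ⟨diagonal fun y => ZMod.stdAddChar (k y.2 * f p c y.1),
        diagonal_mem_unitaryGroup _ fun _ => AddChar.norm_apply _ _⟩)
    (0, m₀) (Finset.univ ×ˢ {m₀})
  refine ⟨M, fun x a S ha hS hastep hSstep => ?_⟩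
  have hacc : M.acceptProb x =
      Complex.normSq (∑ m, ZMod.stdAddChar (k m * S n)) / (100 * q : ℝ) ^ 2 := by
    rw [hM x (fun p => fingerprintVec k (a p) (S p)) (by rw [hb', ha, hS])]
    · rw [Finset.sum_product]
      simp only [Finset.sum_singleton, hb', star_fingerprintVec_dotProduct]
      rw [Finset.sum_eq_single (a n) (fun c _ hc => by simp [hc]) (by simp)]
      rw [if_pos rfl, map_mul, Complex.normSq_inv, Complex.normSq_natCast]
      push_cast
      rw [div_eq_inv_mul]
      ring
    · intro p
      change _ = (Equiv.Perm.permMatrix ℂ _ * diagonal _) *ᵥ _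
      rw [← mulVec_mulVec, diagonal_mulVec_fingerprintVec, permMatrix_mulVec_fingerprintVec,
        hastep, hSstep]
  have hpos : (0 : ℝ) < 100 * q := by exact_mod_cast ht
  refine ⟨fun h0 => ?_, fun h0 => ?_⟩
  · rw [hacc, h0]
    simp only [mul_zero, AddChar.map_zero_eq_one, Finset.sum_const, Finset.card_univ,
      Fintype.card_fin, nsmul_eq_mul, mul_one, Complex.normSq_natCast]
    push_cast
    rw [← sq]
    exact div_self (by positivity)
  · rw [hacc, div_le_iff₀ (by positivity)]
    linarith [hk _ h0]

lemma mul_add_eq_mul_add_iff {m a b r s : ℕ} (hr : r < m) (hs : s < m) :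
    a * m + r = b * m + s ↔ a = b ∧ r = s := by
  refine ⟨fun h => ?_, by rintro ⟨rfl, rfl⟩; rfl⟩
  have hab : a = b := by
    have h' := congrArg (· / m) h
    have hm : 0 < m := by omega
    simpa [Nat.add_div_of_dvd_right, hm, Nat.div_eq_of_lt hr, Nat.div_eq_of_lt hs] using h'
  subst hab
  exact ⟨rfl, by omega⟩

/-- The variable read at position `j` of block `i` when each address block is followed by its
value bit. -/
def blockVar {Q l : ℕ} (y : Fin Q × Fin (l + 1)) : Fin (Q * (l + 1)) :=
  if h : (y.2 : ℕ) < l then ⟨y.1 * l + y.2, zIdx y.1 ⟨y.2, h⟩⟩ else ⟨Q * l + y.1, yIdx y.1⟩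

lemma blockVar_injective {Q l : ℕ} : Function.Injective (blockVar (Q := Q) (l := l)) := by
  rintro ⟨i, j⟩ ⟨i', j'⟩ h
  have hz : ∀ (i : Fin Q) (j : ℕ), j < l → (i : ℕ) * l + j < Q * l := fun i j hj => by
    have := Nat.mul_le_mul_right l (Nat.succ_le_of_lt i.2)
    rw [Nat.succ_mul] at this
    omega
  simp only [blockVar] at h
  ext
  all_goals
    split_ifs at h with h1 h2 h2
    all_goals rw [Fin.mk.injEq] at h
    · simp [(mul_add_eq_mul_add_iff h1 h2).mp h]
    · have := hz i j h1; omega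
    · have := hz i' j' h2; omega
    · simp only; omega

/-- The reading order that interleaves address blocks and value bits. -/
noncomputable def blockOrd (Q l : ℕ) : Equiv.Perm (Fin (Q * (l + 1))) :=
  finProdFinEquiv.symm.trans
    (Equiv.ofBijective blockVar ((Fintype.bijective_iff_injective_and_card _).mpr
      ⟨blockVar_injective, by simp⟩))

lemma blockOrd_apply {Q l : ℕ} (y : Fin Q × Fin (l + 1)) :
    blockOrd Q l (finProdFinEquiv y) = blockVar y := by
  simp [blockOrd]

lemma sum_ite_lt_succ {Q : ℕ} {A : Type*} [AddCommMonoid A] (c : Fin Q → ℕ) (g : Fin Q → A)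
    (p : ℕ) : (∑ i, if c i < p + 1 then g i else 0) =
      (∑ i, if c i < p then g i else 0) + ∑ i, if c i = p then g i else 0 := by
  rw [← Finset.sum_add_distrib]
  refine Finset.sum_congr rfl fun i _ => ?_
  rcases lt_trichotomy (c i) p with h | h | h
  · simp [h, h.ne, Nat.lt_succ_of_lt h]
  · simp [h]
  · simp [h.ne', not_lt.mpr h.le, not_lt.mpr (Nat.succ_le_of_lt h)]

/-- The signed contribution to `u - v` of a value bit at a given address. -/
def reqWeight (q A : ℕ) : ZMod (2 ^ q) := if A < q then 2 ^ A else -2 ^ (A - q)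

lemma REQ_eq_true_iff (q : ℕ) (x : Fin (2 * q * (Nat.clog 2 (2 * q) + 1)) → Bool) :
    REQ q x = true ↔
      (∑ i, if yOf (2 * q) (Nat.clog 2 (2 * q)) x i then reqWeight q (reqAdr q x i) else 0) = 0 := by
  have hcast : reqU q x = reqV q x ↔ (reqU q x : ZMod (2 ^ q)) = reqV q x := by
    rw [ZMod.natCast_eq_natCast_iff']
    simp [reqU, reqV]
  rw [REQ, decide_eq_true_iff, hcast, ← sub_eq_zero, reqU, reqV, ZMod.natCast_mod,
    ZMod.natCast_mod, Nat.cast_sum, Nat.cast_sum, ← Finset.sum_sub_distrib]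
  refine Eq.congr_left (Finset.sum_congr rfl fun i _ => ?_)
  unfold reqWeight
  by_cases hy : yOf (2 * q) (Nat.clog 2 (2 * q)) x i <;> by_cases hA : reqAdr q x i < q <;>
    simp [hy, hA, not_le.mpr, not_lt.mp]

/-- The address register of the interleaved order after reading `p` variables. -/
def addrRegister (Q l : ℕ) (x : Fin (Q * (l + 1)) → Bool) (p : ℕ) : Fin l → ZMod 2 :=
  fun j => ∑ i : Fin Q, if i * (l + 1) + j < p then (if zOf Q l x i j then 1 else 0) else 0

lemma addrRegister_eq_xorZ {Q l : ℕ} (x : Fin (Q * (l + 1)) → Bool) (i : Fin Q) :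
    (fun j => decide (addrRegister Q l x (i * (l + 1) + l) j = 1)) = xorZ Q l x i := by
  ext j
  have hlt : ∀ i' : Fin Q, (i' : ℕ) * (l + 1) + j < i * (l + 1) + l ↔ i' ≤ i := fun i' => by
    rw [Fin.le_def]
    refine ⟨fun h => ?_, fun h => ?_⟩
    · by_contra! hlt
      have := Nat.mul_le_mul_right (l + 1) (Nat.succ_le_of_lt hlt)
      rw [Nat.succ_mul] at this
      omega
    · have := Nat.mul_le_mul_right (l + 1) h
      omega
  simp only [addrRegister, xorZ, hlt, ← ite_and]
  simp only [Finset.sum_boole, ZMod.natCast_eq_one_iff_odd, Nat.odd_iff]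

lemma addrRegister_succ {Q l : ℕ} (x : Fin (Q * (l + 1)) → Bool) (y : Fin Q × Fin (l + 1)) :
    addrRegister Q l x (y.1 * (l + 1) + y.2 + 1) = addrRegister Q l x (y.1 * (l + 1) + y.2) +
      fun j : Fin l => if (j : ℕ) = y.2 ∧ x (blockVar y) = true then 1 else 0 := by
  obtain ⟨i, r⟩ := y
  ext j
  simp only [addrRegister, Pi.add_apply]
  rw [sum_ite_lt_succ]
  congr 1
  rw [Finset.sum_eq_single i]
  · by_cases hr : (j : ℕ) = r
    · have hl : (r : ℕ) < l := hr ▸ j.2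
      have hx : x (blockVar (i, r)) = zOf Q l x i j := by
        simp [blockVar, zOf, hl, hr]
      simp [hr, hx]
    · simp [hr]
  · intro i' _ hi'
    rw [if_neg]
    rw [mul_add_eq_mul_add_iff (Nat.lt_succ_of_lt j.2) r.2]
    exact fun h => hi' (Fin.ext h.1)
  · simp

lemma valueSum_succ {Q l : ℕ} {A : Type*} [AddCommMonoid A] (x : Fin (Q * (l + 1)) → Bool)
    (g : Fin Q → A) (y : Fin Q × Fin (l + 1)) :
    (∑ i : Fin Q, if i * (l + 1) + l < y.1 * (l + 1) + y.2 + 1 then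
        (if yOf Q l x i then g i else 0) else 0) =
      (∑ i : Fin Q, if i * (l + 1) + l < y.1 * (l + 1) + y.2 then
        (if yOf Q l x i then g i else 0) else 0) +
      if (y.2 : ℕ) = l ∧ x (blockVar y) = true then g y.1 else 0 := by
  obtain ⟨i, r⟩ := y
  rw [sum_ite_lt_succ]
  congr 1
  rw [Finset.sum_eq_single i]
  · by_cases hr : (r : ℕ) = l
    · have hx : x (blockVar (i, r)) = yOf Q l x i := by
        simp [blockVar, yOf, hr]
      simp [hr, hx]
    · simp [hr, Ne.symm hr]
  · intro i' _ hi'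
    rw [if_neg]
    rw [mul_add_eq_mul_add_iff (Nat.lt_succ_self l) r.2]
    exact fun h => hi' (Fin.ext h.1)
  · simp

/-- `REQ_q` has a one-sided bounded-error QOBDD of width `O(q²)`. -/
theorem stmt10 :
    ∃ c : ℕ, 0 < c ∧
      ∀ q : ℕ, 1 ≤ q →
        ∃ W : ℕ, W ≤ c * q ^ 2 ∧
          ∃ M : QOBDD (2 * q * (Nat.clog 2 (2 * q) + 1)) W,
            ∀ x, (REQ q x = true → M.acceptProb x = 1) ∧
                 (REQ q x = false → M.acceptProb x ≤ 1 / 3) := by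
  refine ⟨400, by norm_num, fun q hq => ?_⟩
  obtain ⟨M, hM⟩ := QOBDD.exists_fingerprint q hq (H := Fin (Nat.clog 2 (2 * q)) → ZMod 2)
    (blockOrd (2 * q) (Nat.clog 2 (2 * q)))
    (fun p c j => if (j : ℕ) = (finProdFinEquiv.symm p).2 ∧ c = true then 1 else 0)
    (fun p c a => if ((finProdFinEquiv.symm p).2 : ℕ) = Nat.clog 2 (2 * q) ∧ c = true then
      reqWeight q (binVal _ fun j => decide (a j = 1)) else 0)
  refine ⟨_, ?_, M, fun x => ?_⟩
  · have hpow : 2 ^ Nat.clog 2 (2 * q) ≤ 4 * q := by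
      have h := Nat.pow_pred_clog_lt_self (b := 2) (by norm_num) (x := 2 * q) (by omega)
      have hpos : 0 < Nat.clog 2 (2 * q) := Nat.clog_pos (by norm_num) (by omega)
      obtain ⟨l, hl⟩ := Nat.exists_eq_succ_of_ne_zero hpos.ne'
      rw [hl, Nat.pred_succ] at h
      rw [hl, Nat.pow_succ]
      omega
    rw [Fintype.card_prod, Fintype.card_fun, ZMod.card, Fintype.card_fin, Fintype.card_fin]
    nlinarith
  · have hval : ∀ y : Fin (2 * q) × Fin (Nat.clog 2 (2 * q) + 1),
        (finProdFinEquiv y : ℕ) = y.1 * (Nat.clog 2 (2 * q) + 1) + y.2 := fun y => by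
      rw [finProdFinEquiv_apply_val]; ring
    have h := hM x (addrRegister (2 * q) (Nat.clog 2 (2 * q)) x)
      (fun p => ∑ i : Fin (2 * q),
        if i * (Nat.clog 2 (2 * q) + 1) + Nat.clog 2 (2 * q) < p then
          (if yOf (2 * q) (Nat.clog 2 (2 * q)) x i then reqWeight q (reqAdr q x i) else 0) else 0)
      (by ext; simp [addrRegister]) (by simp)
      (fun p => by
        obtain ⟨y, rfl⟩ := finProdFinEquiv.surjective p
        rw [blockOrd_apply, Equiv.symm_apply_apply, hval]
        exact addrRegister_succ x y)
      (fun p => by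
        obtain ⟨y, rfl⟩ := finProdFinEquiv.surjective p
        rw [blockOrd_apply, Equiv.symm_apply_apply, hval, valueSum_succ]
        congr 1
        refine if_ctx_congr Iff.rfl (fun hy => ?_) fun _ => rfl
        rw [hy.1, addrRegister_eq_xorZ]
        rfl)
    have hend : ∀ i : Fin (2 * q), (i : ℕ) * (Nat.clog 2 (2 * q) + 1) + Nat.clog 2 (2 * q) <
        2 * q * (Nat.clog 2 (2 * q) + 1) := fun i => by
      have := Nat.mul_le_mul_right (Nat.clog 2 (2 * q) + 1) (Nat.succ_le_of_lt i.2)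
      rw [Nat.succ_mul] at this
      omega
    simp only [hend, if_true] at h
    rw [← REQ_eq_true_iff, Ne, ← REQ_eq_true_iff, Bool.not_eq_true] at h
    exact h
end

section
/- There is a constant c > 0 such that for every integer q ≥ 2, every deterministic OBDD (with an arbitrary variable order) representing the shifted equality function SEQ_q has width at least 2^{c·q}. -/
set_option maxHeartbeats 1000000
set_option linter.unusedVariables false
/-- A deterministic OBDD of width `w` over `n` Boolean variables. -/
structure OBDD (n w : ℕ) where
  ord : Equiv.Perm (Fin n)
  tr : Fin n → Fin w → Bool → Fin w
  start : Fin w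
  acc : Finset (Fin w)

namespace OBDD

def final {n w : ℕ} (M : OBDD n w) (x : Fin n → Bool) : Fin w :=
  (List.finRange n).foldl (fun s i => M.tr i s (x (M.ord i))) M.start

def Accepts {n w : ℕ} (M : OBDD n w) (x : Fin n → Bool) : Prop :=
  M.final x ∈ M.acc

def Represents {n w : ℕ} (M : OBDD n w) (f : (Fin n → Bool) → Bool) : Prop :=
  ∀ x, M.Accepts x ↔ f x = true

def RepresentsPartial {n w : ℕ} (M : OBDD n w) (F : (Fin n → Bool) → Option Bool) : Prop :=
  ∀ x b, F x = some b → (M.Accepts x ↔ b = true)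

/-- The OBDD obtained by reordering: order `π`, transitions `tr' i = tr (ord⁻¹ (π i))`. -/
def reorder {n w : ℕ} (M : OBDD n w) (π : Equiv.Perm (Fin n)) : OBDD n w :=
  ⟨π, fun i => M.tr (M.ord.symm (π i)), M.start, M.acc⟩

/-- Every reordering represents the same function as `M`. -/
def Commutative {n w : ℕ} (M : OBDD n w) : Prop :=
  ∀ (π : Equiv.Perm (Fin n)) (x : Fin n → Bool),
    (M.reorder π).Accepts x ↔ M.Accepts x

end OBDD
/-- The shift `bin(s_1,…,s_l)` encoded in the last `l = ⌈log₂ q⌉` bits. -/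
def seqShift (q : ℕ) (x : Fin (2 * q + Nat.clog 2 q) → Bool) : ℕ :=
  binVal (Nat.clog 2 q) (fun j => x ⟨2 * q + (j : ℕ), by have := j.isLt; omega⟩)

/-- The shifted equality function `SEQ_q`. -/
def SEQ (q : ℕ) (x : Fin (2 * q + Nat.clog 2 q) → Bool) : Bool :=
  decide (∀ i : Fin q,
    x ⟨(i : ℕ), by have := i.isLt; omega⟩ =
      x ⟨q + (((i : ℕ) + seqShift q x) % q), by
          have h := Nat.mod_lt ((i : ℕ) + seqShift q x) i.pos
          omega⟩)

theorem exists_binVal_eq (l s : ℕ) (hs : s < 2 ^ l) : ∃ a : Fin l → Bool, binVal l a = s := by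
  induction l generalizing s with
  | zero => exact ⟨Fin.elim0, by simp [binVal]; omega⟩
  | succ l ih =>
    obtain ⟨a, ha⟩ := ih (s % 2 ^ l) (Nat.mod_lt _ (by positivity))
    refine ⟨Fin.cons (decide (2 ^ l ≤ s)) a, ?_⟩
    have hrest : binVal (l + 1) (Fin.cons (decide (2 ^ l ≤ s)) a)
        = (if 2 ^ l ≤ s then 2 ^ l else 0) + binVal l a := by
      unfold binVal
      rw [Fin.sum_univ_succ]
      congr 1
      · simp
      · refine Finset.sum_congr rfl fun j _ => ?_
        have h : l + 1 - 1 - (j.succ : ℕ) = l - 1 - (j : ℕ) := by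
          rw [Fin.val_succ]; omega
        rw [Fin.cons_succ, h]
    rw [hrest, ha]
    rw [pow_succ] at hs
    split_ifs with h
    · rw [Nat.mod_eq_sub_mod h, Nat.mod_eq_of_lt (by omega)]
      omega
    · rw [Nat.mod_eq_of_lt (by omega)]
      omega

namespace OBDD

variable {n w : ℕ}

/-- The state of `M` on input `x` after reading `k` variables. -/
def stateAt (M : OBDD n w) (k : ℕ) (x : Fin n → Bool) : Fin w :=
  ((List.finRange n).take k).foldl (fun s i => M.tr i s (x (M.ord i))) M.start

/-- The input agreeing with `x` on the first `k` variables read by `M`, and with `y` on the rest. -/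
def splice (M : OBDD n w) (k : ℕ) (x y : Fin n → Bool) : Fin n → Bool :=
  fun j => if (M.ord.symm j : ℕ) < k then x j else y j

theorem final_eq_foldl_stateAt (M : OBDD n w) (k : ℕ) (x : Fin n → Bool) :
    M.final x =
      ((List.finRange n).drop k).foldl (fun s i => M.tr i s (x (M.ord i))) (M.stateAt k x) := by
  unfold final stateAt
  rw [← List.foldl_append, List.take_append_drop]

theorem stateAt_splice (M : OBDD n w) (k : ℕ) (x y : Fin n → Bool) :
    M.stateAt k (M.splice k x y) = M.stateAt k x := by
  unfold stateAt
  refine List.foldl_ext _ _ _ fun s i hi => ?_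
  obtain ⟨m, hm, rfl⟩ := List.mem_take_iff_getElem.1 hi
  have hmk : m < k := by omega
  simp [splice, hmk]

theorem final_splice (M : OBDD n w) (k : ℕ) (x y : Fin n → Bool)
    (h : M.stateAt k x = M.stateAt k y) : M.final (M.splice k x y) = M.final y := by
  rw [M.final_eq_foldl_stateAt k, M.final_eq_foldl_stateAt k y, stateAt_splice, h]
  refine List.foldl_ext _ _ _ fun s i hi => ?_
  obtain ⟨m, hm, rfl⟩ := List.mem_drop_iff_getElem.1 hi
  simp [splice]

/-- The fooling set bound for the width of an OBDD. -/
theorem card_le_width {α : Type*} [Fintype α] (M : OBDD n w) {f : (Fin n → Bool) → Bool}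
    (hM : M.Represents f) (k : ℕ) (E : α → Fin n → Bool) (hE : ∀ a, f (E a) = true)
    (hsplice : ∀ a b, f (M.splice k (E a) (E b)) = true → a = b) : Fintype.card α ≤ w := by
  have hinj : Function.Injective fun a => M.stateAt k (E a) := by
    intro a b hab
    refine hsplice a b ((hM _).1 ?_)
    unfold Accepts
    rw [M.final_splice k _ _ hab]
    exact (hM _).2 (hE b)
  simpa using Fintype.card_le_of_injective _ hinj

end OBDD

/-- Cutting an injective enumeration of a finite type at any prescribed cardinality. -/
theorem exists_card_filter_lt_eq {α : Type*} [Fintype α] (p : α → ℕ) (hp : Function.Injective p)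
    {m : ℕ} (hm : m ≤ Fintype.card α) :
    ∃ k, (Finset.univ.filter fun u => p u < k).card = m := by
  classical
  induction m with
  | zero => exact ⟨0, by simp⟩
  | succ m ih =>
    have hex : ∃ k, m + 1 ≤ (Finset.univ.filter fun u => p u < k).card := by
      refine ⟨Finset.univ.sup p + 1, hm.trans_eq ?_⟩
      rw [Finset.filter_true_of_mem fun u hu => Nat.lt_succ_of_le (Finset.le_sup hu),
        Finset.card_univ]
    refine ⟨Nat.find hex, le_antisymm ?_ (Nat.find_spec hex)⟩
    rcases hk : Nat.find hex with _ | k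
    · simp
    · have hlt : ¬ m + 1 ≤ (Finset.univ.filter fun u => p u < k).card :=
        Nat.find_min hex (by omega)
      have hsub : (Finset.univ.filter fun u => p u < k + 1) ⊆
          (Finset.univ.filter fun u => p u < k) ∪ (Finset.univ.filter fun u => p u = k) := by
        intro u
        simp only [Finset.mem_filter, Finset.mem_union, Finset.mem_univ, true_and]
        omega
      have hone : (Finset.univ.filter fun u => p u = k).card ≤ 1 := by
        refine Finset.card_le_one.2 fun a ha b hb => hp ?_
        rw [(Finset.mem_filter.1 ha).2, (Finset.mem_filter.1 hb).2]
      have := (Finset.card_le_card hsub).trans (Finset.card_union_le _ _)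
      omega

/-- Two subsets of a finite group of total size `|G|` are separated at many places by some
translation. -/
theorem exists_shift_separating {G : Type*} [AddGroup G] [Fintype G] (A B : G → Prop)
    [DecidablePred A] [DecidablePred B]
    (hAB : (Finset.univ.filter A).card + (Finset.univ.filter B).card = Fintype.card G) :
    ∃ s : G, Fintype.card G ≤ 2 * (Finset.univ.filter fun i => ¬ (A i ↔ B (i + s))).card := by
  by_contra hcon
  have hlt s := not_le.1 (not_exists.1 hcon s)
  set a := (Finset.univ.filter A).card with ha
  set b := (Finset.univ.filter B).card with hb
  have hA' : (Finset.univ.filter fun i => ¬ A i).card = b := by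
    have := Finset.card_filter_add_card_filter_not (s := (Finset.univ : Finset G)) A
    rw [Finset.card_univ] at this
    omega
  have hB' : (Finset.univ.filter fun i => ¬ B i).card = a := by
    have := Finset.card_filter_add_card_filter_not (s := (Finset.univ : Finset G)) B
    rw [Finset.card_univ] at this
    omega
  have hrow (i : G) : (∑ s : G, if ¬ (A i ↔ B (i + s)) then 1 else 0) = if A i then a else b := by
    refine (Equiv.sum_comp (Equiv.addLeft i) fun t => if ¬ (A i ↔ B t) then 1 else 0).trans ?_
    rw [← Finset.card_filter]
    by_cases h : A i
    · simpa only [h, true_iff, if_true] using hB'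
    · simp [h, hb]
  have hsum : ∑ s : G, (Finset.univ.filter fun i => ¬ (A i ↔ B (i + s))).card
      = a * a + b * b := by
    simp_rw [Finset.card_filter]
    rw [Finset.sum_comm]
    simp_rw [hrow]
    rw [Finset.sum_ite, Finset.sum_const, Finset.sum_const, hA', ← ha, smul_eq_mul, smul_eq_mul]
  have htotal : ∑ s : G, 2 * (Finset.univ.filter fun i => ¬ (A i ↔ B (i + s))).card
      < ∑ _s : G, Fintype.card G :=
    Finset.sum_lt_sum_of_nonempty ⟨0, Finset.mem_univ _⟩ fun s _ => hlt s
  rw [← Finset.mul_sum, hsum, Finset.sum_const, Finset.card_univ, smul_eq_mul, ← hAB] at htotal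
  nlinarith [sq_nonneg ((a : ℤ) - b), (by exact_mod_cast htotal :
    2 * ((a : ℤ) * a + b * b) < (a + b) * (a + b))]

section SEQ

variable {q : ℕ}

/-- The index of the variable `x_i`. -/
def xIndex (i : Fin q) : Fin (2 * q + Nat.clog 2 q) := ⟨i, by omega⟩

/-- The index of the variable `y_i`. -/
def yIndex (i : Fin q) : Fin (2 * q + Nat.clog 2 q) := ⟨q + i, by omega⟩

/-- The index of the shift bit `s_j`. -/
def shiftIndex (j : Fin (Nat.clog 2 q)) : Fin (2 * q + Nat.clog 2 q) := ⟨2 * q + j, by omega⟩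

theorem seqShift_eq (x : Fin (2 * q + Nat.clog 2 q) → Bool) :
    seqShift q x = binVal (Nat.clog 2 q) fun j => x (shiftIndex j) := rfl

theorem SEQ_eq_true_iff [NeZero q] {x : Fin (2 * q + Nat.clog 2 q) → Bool} {s : Fin q}
    (hs : seqShift q x = s) :
    SEQ q x = true ↔ ∀ i : Fin q, x (xIndex i) = x (yIndex (i + s)) := by
  unfold SEQ
  rw [decide_eq_true_iff]
  refine forall_congr' fun i => ?_
  simp only [xIndex, yIndex, Fin.val_add, hs]

/-- The input with `x = z`, with `y` the shift of `z` by `s`, and with shift bits `a`. -/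
def shiftedInput [NeZero q] (s : Fin q) (a : Fin (Nat.clog 2 q) → Bool) (z : Fin q → Bool) :
    Fin (2 * q + Nat.clog 2 q) → Bool := fun j =>
  if h₁ : (j : ℕ) < q then z ⟨j, h₁⟩
  else if h₂ : (j : ℕ) < 2 * q then z (⟨j - q, by omega⟩ - s)
  else a ⟨j - 2 * q, by omega⟩

variable [NeZero q] (s : Fin q) (a : Fin (Nat.clog 2 q) → Bool) (z : Fin q → Bool)

theorem shiftedInput_xIndex (i : Fin q) : shiftedInput s a z (xIndex i) = z i := by
  simp [shiftedInput, xIndex]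

theorem shiftedInput_yIndex (i : Fin q) : shiftedInput s a z (yIndex i) = z (i - s) := by
  have h : q + (i : ℕ) < 2 * q := by omega
  simp [shiftedInput, yIndex, h]

theorem shiftedInput_shiftIndex (j : Fin (Nat.clog 2 q)) :
    shiftedInput s a z (shiftIndex j) = a j := by
  have h : ¬ 2 * q + (j : ℕ) < q := by omega
  simp [shiftedInput, shiftIndex, h]

theorem two_pow_card_split_le_width {w : ℕ} {M : OBDD (2 * q + Nat.clog 2 q) w}
    (hM : M.Represents (SEQ q)) (k : ℕ) (s : Fin q) :
    2 ^ (Finset.univ.filter fun i : Fin q =>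
      ¬ ((M.ord.symm (xIndex i) : ℕ) < k ↔ (M.ord.symm (yIndex (i + s)) : ℕ) < k)).card ≤ w := by
  set S := Finset.univ.filter fun i : Fin q =>
      ¬ ((M.ord.symm (xIndex i) : ℕ) < k ↔ (M.ord.symm (yIndex (i + s)) : ℕ) < k)
  obtain ⟨a, ha⟩ := exists_binVal_eq (Nat.clog 2 q) s
    (s.isLt.trans_le (Nat.le_pow_clog one_lt_two q))
  let ext (z : S → Bool) (i : Fin q) : Bool := if h : i ∈ S then z ⟨i, h⟩ else false
  have hcard := M.card_le_width hM k (fun z : S → Bool => shiftedInput s a (ext z)) ?_ ?_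
  · simpa using hcard
  · intro z
    rw [SEQ_eq_true_iff (s := s) (by simp only [seqShift_eq, shiftedInput_shiftIndex, ha])]
    intro i
    rw [shiftedInput_xIndex, shiftedInput_yIndex, add_sub_cancel_right]
  · intro z z' h
    rw [SEQ_eq_true_iff (s := s)
      (by simp only [seqShift_eq, OBDD.splice, shiftedInput_shiftIndex, ite_self, ha])] at h
    funext ⟨i, hi⟩
    have hi' := (Finset.mem_filter.1 hi).2
    have hz := h i
    simp only [OBDD.splice, shiftedInput_xIndex, shiftedInput_yIndex, add_sub_cancel_right,
      ext, dif_pos hi] at hz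
    split_ifs at hz <;> first | exact hz | exact hz.symm | (exfalso; tauto)

end SEQ

theorem exists_cut_and_shift {q w : ℕ} [NeZero q] (M : OBDD (2 * q + Nat.clog 2 q) w) :
    ∃ (k : ℕ) (s : Fin q), q ≤ 2 * (Finset.univ.filter fun i : Fin q =>
      ¬ ((M.ord.symm (xIndex i) : ℕ) < k ↔
        (M.ord.symm (yIndex (i + s)) : ℕ) < k)).card := by
  let e : Fin q ⊕ Fin q → Fin (2 * q + Nat.clog 2 q) := Sum.elim xIndex yIndex
  have he : Function.Injective e := by
    rintro (i | i) (j | j) h <;>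
      simp only [e, Sum.elim_inl, Sum.elim_inr, xIndex, yIndex, Fin.mk.injEq] at h
    · exact congrArg _ (Fin.ext h)
    · omega
    · omega
    · exact congrArg _ (Fin.ext (by omega))
  obtain ⟨k, hk⟩ := exists_card_filter_lt_eq (fun u => (M.ord.symm (e u) : ℕ))
    (Fin.val_injective.comp (M.ord.symm.injective.comp he)) (m := q) (by simp)
  rw [Finset.card_filter, Fintype.sum_sum_type, ← Finset.card_filter, ← Finset.card_filter] at hk
  obtain ⟨s, hs⟩ := exists_shift_separating (G := Fin q)
    (fun i => (M.ord.symm (xIndex i) : ℕ) < k) (fun i => (M.ord.symm (yIndex i) : ℕ) < k)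
    (hk.trans (Fintype.card_fin q).symm)
  exact ⟨k, s, (Fintype.card_fin q).symm.trans_le hs⟩

/-- every deterministic OBDD representing `SEQ_q` has width `2^{Ω(q)}`. -/
theorem stmt11 :
    ∃ c : ℝ, 0 < c ∧
      ∀ q : ℕ, 2 ≤ q → ∀ (w : ℕ) (M : OBDD (2 * q + Nat.clog 2 q) w),
        M.Represents (SEQ q) → (2 : ℝ) ^ (c * (q : ℝ)) ≤ (w : ℝ) := by
  refine ⟨1 / 2, by norm_num, fun q hq w M hM => ?_⟩
  have : NeZero q := ⟨by omega⟩
  obtain ⟨m, hs, hw⟩ : ∃ m, q ≤ 2 * m ∧ 2 ^ m ≤ w := by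
    obtain ⟨k, s, hs⟩ := exists_cut_and_shift M
    exact ⟨_, hs, two_pow_card_split_le_width hM k s⟩
  have hs' : (q : ℝ) ≤ 2 * m := by exact_mod_cast hs
  calc (2 : ℝ) ^ (1 / 2 * (q : ℝ)) ≤ (2 : ℝ) ^ (m : ℝ) :=
        Real.rpow_le_rpow_of_exponent_le one_le_two (by linarith)
    _ = ((2 ^ m : ℕ) : ℝ) := by rw [Real.rpow_natCast]; push_cast; rfl
    _ ≤ w := by exact_mod_cast hw
end

section
/- There is a constant c such that for all integers k ≥ 1 and m ≥ 2 there is a commutative deterministic 2kOBDD of width at most c·m² representing PJ_{2k−1,m}; in terms of the input length n = 2m⌈log₂ m⌉ the width is O(n²). -/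
set_option maxHeartbeats 1000000
set_option linter.unusedVariables false
/-- A deterministic kOBDD of width `w` over `n` variables: `k` layers reading in order `ord`. -/
structure KOBDD (k n w : ℕ) where
  ord : Equiv.Perm (Fin n)
  tr : Fin k → Fin n → Fin w → Bool → Fin w
  start : Fin w
  acc : Finset (Fin w)

namespace KOBDD

def layerRun {k n w : ℕ} (M : KOBDD k n w) (t : Fin k) (s : Fin w) (x : Fin n → Bool) : Fin w :=
  (List.finRange n).foldl (fun a i => M.tr t i a (x (M.ord i))) s

def final {k n w : ℕ} (M : KOBDD k n w) (x : Fin n → Bool) : Fin w :=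
  (List.finRange k).foldl (fun s t => M.layerRun t s x) M.start

def Accepts {k n w : ℕ} (M : KOBDD k n w) (x : Fin n → Bool) : Prop :=
  M.final x ∈ M.acc

def Represents {k n w : ℕ} (M : KOBDD k n w) (f : (Fin n → Bool) → Bool) : Prop :=
  ∀ x, M.Accepts x ↔ f x = true

def RepresentsPartial {k n w : ℕ} (M : KOBDD k n w) (F : (Fin n → Bool) → Option Bool) : Prop :=
  ∀ x b, F x = some b → (M.Accepts x ↔ b = true)

/-- Each layer is a commutative OBDD: for every reading order `π`, the reordered layer
(with transitions `tr' i = tr (ord⁻¹(π i))`) computes, from every start state,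
the same state transformation as the original layer. -/
def Commutative {k n w : ℕ} (M : KOBDD k n w) : Prop :=
  ∀ (π : Equiv.Perm (Fin n)) (t : Fin k) (s : Fin w) (x : Fin n → Bool),
    (List.finRange n).foldl (fun a i => M.tr t (M.ord.symm (π i)) a (x (π i))) s =
      M.layerRun t s x

end KOBDD
lemma blockIdx {m l b : ℕ} (hb : b < 2 * m) (j : Fin l) : b * l + (j : ℕ) < 2 * m * l :=
  calc b * l + (j : ℕ) < b * l + l := Nat.add_lt_add_left j.isLt _
    _ = (b + 1) * l := by ring
    _ ≤ 2 * m * l := Nat.mul_le_mul hb (Nat.le_refl l)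

/-- Index of the block encoding `f^A(v)` (`side = false`) or `f^B(v)` (`side = true`). -/
def pjBlock (m : ℕ) (side : Bool) (v : ℕ) : ℕ :=
  cond side (m + v % m) (v % m)

lemma pjBlock_lt {m : ℕ} (hm : 0 < m) (side : Bool) (v : ℕ) : pjBlock m side v < 2 * m := by
  have h := Nat.mod_lt v hm
  cases side with
  | false => exact lt_of_lt_of_le h (by omega)
  | true => exact lt_of_lt_of_eq (Nat.add_lt_add_left h m) (two_mul m).symm

/-- The value `f^A(v)` (`side = false`) or `f^B(v)` (`side = true`) encoded in the input. -/
def pjF (m : ℕ) (hm : 0 < m) (x : Fin (2 * m * Nat.clog 2 m) → Bool)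
    (side : Bool) (v : ℕ) : ℕ :=
  binVal (Nat.clog 2 m) (fun j =>
    x ⟨pjBlock m side v * Nat.clog 2 m + (j : ℕ), blockIdx (pjBlock_lt hm side v) j⟩) % m

/-- `v_j`: `v_0 = 0`, `v_{j+1} = f^A(v_j)` for even `j`, `v_{j+1} = f^B(v_j)` for odd `j`. -/
def pjV (m : ℕ) (hm : 0 < m) (x : Fin (2 * m * Nat.clog 2 m) → Bool) : ℕ → ℕ
  | 0 => 0
  | j + 1 => pjF m hm x (decide (j % 2 = 1)) (pjV m hm x j)

/-- The pointer jumping function `PJ_{k,m}`: the parity of the bits of `v_k`. -/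
def PJ (k m : ℕ) (hm : 0 < m) (x : Fin (2 * m * Nat.clog 2 m) → Bool) : Bool :=
  decide ((Nat.digits 2 (pjV m hm x k)).sum % 2 = 1)

/-- Contribution of a bit `b` at position `i` to the value encoded in the block of `v`. -/
def pjContrib (m : ℕ) (hm : 0 < m) (side : Bool) (v : ℕ) (i : Fin (2 * m * Nat.clog 2 m))
    (b : Bool) : ℕ :=
  ∑ j : Fin (Nat.clog 2 m),
    if i = ⟨pjBlock m side v * Nat.clog 2 m + (j : ℕ), blockIdx (pjBlock_lt hm side v) j⟩ then
      (if b then 2 ^ (Nat.clog 2 m - 1 - (j : ℕ)) else 0) else 0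

lemma sum_pjContrib_mod (m : ℕ) (hm : 0 < m) (x : Fin (2 * m * Nat.clog 2 m) → Bool)
    (side : Bool) (v : ℕ) :
    (∑ i, pjContrib m hm side v i (x i)) % m = pjF m hm x side v := by
  unfold pjContrib pjF binVal
  rw [Finset.sum_comm]
  simp

lemma pjF_lt (m : ℕ) (hm : 0 < m) (x : Fin (2 * m * Nat.clog 2 m) → Bool)
    (side : Bool) (v : ℕ) : pjF m hm x side v < m :=
  Nat.mod_lt _ hm

lemma pjV_lt (m : ℕ) (hm : 0 < m) (x : Fin (2 * m * Nat.clog 2 m) → Bool) (j : ℕ) :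
    pjV m hm x j < m := by
  cases j with
  | zero => exact hm
  | succ j => exact pjF_lt m hm x _ _

/-- States of the pointer-jumping program: a pointer, an accumulator, and the parity of the layer
that last updated them. -/
abbrev PJState (m : ℕ) := ZMod m × ZMod m × Bool

/-- Pointer and accumulator as seen by a layer of parity `f`: a state left by a layer of the other
parity is read as a fresh start whose pointer is the old accumulator. -/
def pjView {m : ℕ} (f : Bool) (s : PJState m) : ZMod m × ZMod m :=
  if s.2.2 = f then (s.1, s.2.1) else (s.2.1, 0)

/-- Transition of a layer of parity `f` at position `i`. -/
def pjStep (m : ℕ) (hm : 0 < m) (f : Bool) (i : Fin (2 * m * Nat.clog 2 m)) (s : PJState m)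
    (b : Bool) : PJState m :=
  ((pjView f s).1, (pjView f s).2 + (pjContrib m hm f (pjView f s).1.val i b : ZMod m), f)

lemma pjView_pjStep (m : ℕ) (hm : 0 < m) (f : Bool) (i : Fin (2 * m * Nat.clog 2 m))
    (s : PJState m) (b : Bool) :
    pjView f (pjStep m hm f i s b) =
      ((pjView f s).1, (pjView f s).2 + (pjContrib m hm f (pjView f s).1.val i b : ZMod m)) := by
  simp [pjStep, pjView]

lemma pjStep_comm (m : ℕ) (hm : 0 < m) (f : Bool) (i j : Fin (2 * m * Nat.clog 2 m))
    (s : PJState m) (b c : Bool) :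
    pjStep m hm f i (pjStep m hm f j s c) b = pjStep m hm f j (pjStep m hm f i s b) c := by
  rw [pjStep, pjView_pjStep, pjStep, pjView_pjStep]
  simp only [add_right_comm]

lemma foldl_pjStep (m : ℕ) (hm : 0 < m) (f : Bool) (x : Fin (2 * m * Nat.clog 2 m) → Bool)
    (L : List (Fin (2 * m * Nat.clog 2 m))) (hL : L ≠ []) (s : PJState m) :
    L.foldl (fun a i => pjStep m hm f i a (x i)) s =
      ((pjView f s).1, (pjView f s).2 +
        ((L.map fun i => pjContrib m hm f (pjView f s).1.val i (x i)).sum : ℕ), f) := by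
  induction L generalizing s with
  | nil => exact absurd rfl hL
  | cons i L ih =>
    rcases eq_or_ne L [] with rfl | h
    · simp [pjStep]
    · rw [List.foldl_cons, ih h, pjView_pjStep]
      simp [add_assoc]

/-- The state transformation of a layer of parity `f`. -/
def pjLayer (m : ℕ) (hm : 0 < m) (x : Fin (2 * m * Nat.clog 2 m) → Bool) (f : Bool)
    (s : PJState m) : PJState m :=
  (List.finRange (2 * m * Nat.clog 2 m)).foldl (fun a i => pjStep m hm f i a (x i)) s

lemma pjLayer_not (m : ℕ) (hm : 0 < m) (hm2 : 2 ≤ m) (x : Fin (2 * m * Nat.clog 2 m) → Bool) (f : Bool)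
    (p : ZMod m) (v : ℕ) (hv : v < m) :
    pjLayer m hm x f (p, (v : ZMod m), !f) =
      ((v : ZMod m), (pjF m hm x f v : ZMod m), f) := by
  have hlen : 0 < 2 * m * Nat.clog 2 m :=
    Nat.mul_pos (by omega) (Nat.clog_pos Nat.one_lt_two hm2)
  have hne : List.finRange (2 * m * Nat.clog 2 m) ≠ [] := by
    rw [Ne, ← List.length_eq_zero_iff, List.length_finRange]
    omega
  have hview : pjView f (p, (v : ZMod m), !f) = ((v : ZMod m), 0) := by
    simp [pjView]
  rw [pjLayer, foldl_pjStep _ _ _ _ _ hne, hview, ← sum_pjContrib_mod, ZMod.natCast_mod,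
    ZMod.val_natCast_of_lt hv, zero_add, ← List.ofFn_eq_map, List.sum_ofFn]

lemma foldl_pjLayer (m : ℕ) (hm : 0 < m) (hm2 : 2 ≤ m) (x : Fin (2 * m * Nat.clog 2 m) → Bool) (t : ℕ) :
    (List.range (t + 1)).foldl (fun s t => pjLayer m hm x (decide (t % 2 = 1)) s)
        (0, 0, true) =
      ((pjV m hm x t : ZMod m), (pjV m hm x (t + 1) : ZMod m),
        decide (t % 2 = 1)) := by
  induction t with
  | zero => simpa [pjV] using pjLayer_not m hm hm2 x false 0 0 (by omega)
  | succ t ih =>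
    have hpar : decide (t % 2 = 1) = !decide ((t + 1) % 2 = 1) := by
      rcases Nat.mod_two_eq_zero_or_one t with h | h <;> simp [Nat.add_mod, h]
    rw [List.range_succ, List.foldl_append, ih, List.foldl_cons, List.foldl_nil, hpar,
      pjLayer_not m hm hm2 x _ _ _ (pjV_lt m _ x _)]
    rfl

/-- The pointer-jumping program with `K` layers, with states transported along `e`. -/
def pjProgram (K m W : ℕ) (hm : 0 < m) (e : PJState m ≃ Fin W) :
    KOBDD K (2 * m * Nat.clog 2 m) W where
  ord := Equiv.refl _
  tr t i s b := e (pjStep m hm (decide ((t : ℕ) % 2 = 1)) i (e.symm s) b)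
  start := e (0, 0, true)
  acc := Finset.univ.filter fun s => (Nat.digits 2 (e.symm s).1.val).sum % 2 = 1

lemma pjProgram_layerRun (K m W : ℕ) (hm : 0 < m) (e : PJState m ≃ Fin W) (t : Fin K)
    (s : PJState m) (x : Fin (2 * m * Nat.clog 2 m) → Bool) :
    (pjProgram K m W hm e).layerRun t (e s) x =
      e (pjLayer m hm x (decide ((t : ℕ) % 2 = 1)) s) := by
  unfold KOBDD.layerRun pjLayer
  exact List.foldl_hom e fun a i => by simp [pjProgram]

lemma pjProgram_final (K m W : ℕ) (hm : 0 < m) (e : PJState m ≃ Fin W)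
    (x : Fin (2 * m * Nat.clog 2 m) → Bool) :
    (pjProgram K m W hm e).final x =
      e ((List.range K).foldl (fun s t => pjLayer m hm x (decide (t % 2 = 1)) s)
        (0, 0, true)) := by
  rw [← List.map_coe_finRange_eq_range, List.foldl_map]
  exact List.foldl_hom e fun s t => pjProgram_layerRun K m W hm e t s x

lemma pjProgram_represents (t m W : ℕ) (hm : 0 < m) (hm2 : 2 ≤ m) (e : PJState m ≃ Fin W) :
    (pjProgram (t + 1) m W hm e).Represents (PJ t m hm) := by
  intro x
  rw [KOBDD.Accepts, pjProgram_final, foldl_pjLayer m hm hm2]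
  simp [pjProgram, PJ, ZMod.val_natCast_of_lt (pjV_lt m _ x t)]

lemma pjProgram_commutative (K m W : ℕ) (hm : 0 < m) (e : PJState m ≃ Fin W) :
    (pjProgram K m W hm e).Commutative := by
  intro π t s x
  have hperm : ((List.finRange (2 * m * Nat.clog 2 m)).map π).Perm (List.finRange _) := by
    rw [List.perm_ext_iff_of_nodup ((List.nodup_finRange _).map π.injective)
      (List.nodup_finRange _)]
    intro i
    simpa using π.surjective i
  have hcomm : RightCommutative fun a i => (pjProgram K m W hm e).tr t i a (x i) :=
    ⟨fun a i j => by simp [pjProgram, pjStep_comm m hm _ i j]⟩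
  have h := hperm.foldl_eq (f := fun a i => (pjProgram K m W hm e).tr t i a (x i)) s
  rw [List.foldl_map] at h
  exact h

/-- `PJ_{2k−1,m}` has a commutative deterministic 2kOBDD of width `O(m²)`. -/
theorem stmt17 :
    ∃ c : ℕ, 0 < c ∧
      ∀ k m : ℕ, 1 ≤ k → ∀ hm : 2 ≤ m,
        ∃ W : ℕ, W ≤ c * m ^ 2 ∧
          ∃ M : KOBDD (2 * k) (2 * m * Nat.clog 2 m) W,
            M.Represents (PJ (2 * k - 1) m (by omega)) ∧ M.Commutative := by
  refine ⟨2, two_pos, fun k m hk hm => ?_⟩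
  have : NeZero m := ⟨by omega⟩
  refine ⟨Fintype.card (PJState m), ?_, ?_⟩
  · simp only [Fintype.card_prod, ZMod.card, Fintype.card_bool]
    exact le_of_eq (by ring)
  · obtain ⟨t, ht⟩ : ∃ t, 2 * k = t + 1 := ⟨2 * k - 1, by omega⟩
    rw [ht]
    exact ⟨pjProgram (t + 1) m _ (by omega) (Fintype.equivFin _),
      pjProgram_represents t m _ _ hm _, pjProgram_commutative _ m _ _ _⟩
end
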